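/- Let p : (0,1) → ℝ be twice continuously differentiable, and let ρ, u : ℝ × ℝ → ℝ be smooth with 0 < ρ(t,x) < 1 for all (t,x), satisfying the continuity equation ∂_t ρ + ∂_x(ρ u) = 0 pointwise. Define the desired velocity w := u + ∂_x(p(ρ)). Then ∂_t(ρ w) + ∂_x(ρ u w) = 0 holds pointwise if and only if ∂_t(ρ u) + ∂_x(ρ u²) − ∂_x(ρ² p'(ρ) ∂_x u) = 0 holds pointwise. -/

import Mathlib

/-! Multiplying the continuity equation by `p'(ρ)` gives the renormalized equation
`∂ₜ p(ρ) + u ∂ₓ p(ρ) + ρ p'(ρ) ∂ₓu = 0`. On the other hand the Jacobian of `ρ` and `p(ρ)` vanishes,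
so that `∂ₜ(ρ ∂ₓ p(ρ)) = ∂ₓ(ρ ∂ₜ p(ρ))`. Hence the gradient offset adds to the momentum equation
for `u` the terms `∂ₓ(ρ ∂ₜ p(ρ)) + ∂ₓ(ρ u ∂ₓ p(ρ))`, which are the `x`-derivative of `ρ` times the
first two terms of the renormalized equation, and thus equal `-∂ₓ(ρ² p'(ρ) ∂ₓu)`. -/

open Function (uncurry)
open scoped Topology

section PartialDerivatives

variable {𝕜 F : Type*} [NontriviallyNormedField 𝕜] [NormedAddCommGroup F] [NormedSpace 𝕜 F]
  {f : 𝕜 → 𝕜 → F} {t x : 𝕜} {m n : WithTop ℕ∞}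

lemma hasDerivAt_prodMk_left {g : 𝕜 × 𝕜 → F} {g' : 𝕜 × 𝕜 →L[𝕜] F}
    (hg : HasFDerivAt g g' (t, x)) : HasDerivAt (fun s => g (s, x)) (g' (1, 0)) t :=
  hg.comp_hasDerivAt t ((hasDerivAt_id' t).prodMk (hasDerivAt_const t x))

lemma hasDerivAt_prodMk_right {g : 𝕜 × 𝕜 → F} {g' : 𝕜 × 𝕜 →L[𝕜] F}
    (hg : HasFDerivAt g g' (t, x)) : HasDerivAt (fun y => g (t, y)) (g' (0, 1)) x :=
  hg.comp_hasDerivAt x ((hasDerivAt_const x t).prodMk (hasDerivAt_id' x))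

lemma differentiableAt_uncurry_left (hf : DifferentiableAt 𝕜 (uncurry f) (t, x)) :
    DifferentiableAt 𝕜 (fun s => f s x) t :=
  (hasDerivAt_prodMk_left hf.hasFDerivAt).differentiableAt

lemma differentiableAt_uncurry_right (hf : DifferentiableAt 𝕜 (uncurry f) (t, x)) :
    DifferentiableAt 𝕜 (f t) x :=
  (hasDerivAt_prodMk_right hf.hasFDerivAt).differentiableAt

lemma contDiffAt_uncurry_deriv_left (hf : ContDiffAt 𝕜 n (uncurry f) (t, x)) (hmn : m + 1 ≤ n) :
    ContDiffAt 𝕜 m (uncurry fun s y => deriv (fun r => f r y) s) (t, x) := by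
  have hswap : ContDiffAt 𝕜 n (uncurry fun (q : 𝕜 × 𝕜) r => f r q.2) ((t, x), t) :=
    hf.comp ((t, x), t) (f := fun z : (𝕜 × 𝕜) × 𝕜 => (z.2, z.1.2)) (by fun_prop)
  exact (hswap.fderiv contDiffAt_fst hmn).clm_apply contDiffAt_const

lemma contDiffAt_uncurry_deriv_right (hf : ContDiffAt 𝕜 n (uncurry f) (t, x)) (hmn : m + 1 ≤ n) :
    ContDiffAt 𝕜 m (uncurry fun s y => deriv (f s) y) (t, x) := by
  have hproj : ContDiffAt 𝕜 n (uncurry fun (q : 𝕜 × 𝕜) y => f q.1 y) ((t, x), x) :=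
    hf.comp ((t, x), x) (f := fun z : (𝕜 × 𝕜) × 𝕜 => (z.1.1, z.2)) (by fun_prop)
  exact (hproj.fderiv contDiffAt_snd hmn).clm_apply contDiffAt_const

lemma deriv_deriv_comm (hf : ContDiffAt 𝕜 n (uncurry f) (t, x)) (hn : minSmoothness 𝕜 2 ≤ n) :
    deriv (fun s => deriv (f s) x) t = deriv (fun y => deriv (fun s => f s y) t) x := by
  have hn₂ : 2 ≤ n := le_minSmoothness.trans hn
  have hdiff : ∀ᶠ q in 𝓝 (t, x), DifferentiableAt 𝕜 (uncurry f) q :=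
    ((hf.of_le hn₂).eventually (by simp)).mono fun q hq => hq.differentiableAt two_ne_zero
  have hfderiv : HasFDerivAt (fderiv 𝕜 (uncurry f)) (fderiv 𝕜 (fderiv 𝕜 (uncurry f)) (t, x))
      (t, x) :=
    (hf.fderiv_right (one_add_one_eq_two.trans_le hn₂)).differentiableAt one_ne_zero |>.hasFDerivAt
  have hright : (fun s => deriv (f s) x) =ᶠ[𝓝 t] fun s => fderiv 𝕜 (uncurry f) (s, x) (0, 1) :=
    (Continuous.prodMk_left x).tendsto t |>.eventually hdiff |>.mono fun s hs =>
      (hasDerivAt_prodMk_right hs.hasFDerivAt).deriv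
  have hleft : (fun y => deriv (fun s => f s y) t) =ᶠ[𝓝 x]
      fun y => fderiv 𝕜 (uncurry f) (t, y) (1, 0) :=
    (Continuous.prodMk_right t).tendsto x |>.eventually hdiff |>.mono fun y hy =>
      (hasDerivAt_prodMk_left hy.hasFDerivAt).deriv
  calc deriv (fun s => deriv (f s) x) t
      = fderiv 𝕜 (fderiv 𝕜 (uncurry f)) (t, x) (1, 0) (0, 1) := by
        rw [hright.deriv_eq]
        simpa using ((hasDerivAt_prodMk_left hfderiv).clm_apply (hasDerivAt_const t (0, 1))).deriv
    _ = fderiv 𝕜 (fderiv 𝕜 (uncurry f)) (t, x) (0, 1) (1, 0) :=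
        hf.isSymmSndFDerivAt hn (1, 0) (0, 1)
    _ = deriv (fun y => deriv (fun s => f s y) t) x := by
        rw [hleft.deriv_eq]
        simpa using
          ((hasDerivAt_prodMk_right hfderiv).clm_apply (hasDerivAt_const x (1, 0))).deriv.symm

lemma deriv_mul_deriv_comp_comm {p : 𝕜 → 𝕜} {ρ : 𝕜 → 𝕜 → 𝕜} (hp : ContDiffAt 𝕜 n p (ρ t x))
    (hρ : ContDiffAt 𝕜 n (uncurry ρ) (t, x)) (hn : minSmoothness 𝕜 2 ≤ n) :
    deriv (fun s => ρ s x * deriv (fun y => p (ρ s y)) x) t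
      = deriv (fun y => ρ t y * deriv (fun s => p (ρ s y)) t) x := by
  have hn₂ : 1 + 1 ≤ n := one_add_one_eq_two.trans_le (le_minSmoothness.trans hn)
  have hn₀ : n ≠ 0 := (zero_lt_two.trans_le (le_minSmoothness.trans hn)).ne'
  have hpρ : ContDiffAt 𝕜 n (uncurry fun s y => p (ρ s y)) (t, x) := hp.comp (t, x) hρ
  have hp' := hp.differentiableAt hn₀
  have hρt := differentiableAt_uncurry_left (hρ.differentiableAt hn₀)
  have hρx := differentiableAt_uncurry_right (hρ.differentiableAt hn₀)
  have hjacobian : deriv (fun s => ρ s x) t * deriv (fun y => p (ρ t y)) x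
      = deriv (ρ t) x * deriv (fun s => p (ρ s x)) t := by
    have hx : deriv (fun y => p (ρ t y)) x = deriv p (ρ t x) * deriv (ρ t) x :=
      deriv_comp x hp' hρx
    have ht : deriv (fun s => p (ρ s x)) t = deriv p (ρ t x) * deriv (fun s => ρ s x) t :=
      deriv_comp (h := fun s => ρ s x) t hp' hρt
    rw [hx, ht]
    ring
  rw [deriv_fun_mul hρt (differentiableAt_uncurry_left
      ((contDiffAt_uncurry_deriv_right hpρ hn₂).differentiableAt one_ne_zero)),
    deriv_fun_mul hρx (differentiableAt_uncurry_right
      ((contDiffAt_uncurry_deriv_left hpρ hn₂).differentiableAt one_ne_zero)),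
    hjacobian, deriv_deriv_comm hpρ hn]

end PartialDerivatives

section AwRascle

variable {p : ℝ → ℝ} {ρ u : ℝ → ℝ → ℝ} {t x : ℝ}

/-- The desired velocity `w = u + ∂ₓ p(ρ)` of the Aw–Rascle system with gradient offset. -/
noncomputable def desiredVelocity (p : ℝ → ℝ) (ρ u : ℝ → ℝ → ℝ) (t x : ℝ) : ℝ :=
  u t x + deriv (fun y => p (ρ t y)) x

/-- The left-hand side of the continuity equation `∂ₜρ + ∂ₓ(ρ u) = 0`. -/
noncomputable def continuityResidual (ρ u : ℝ → ℝ → ℝ) (t x : ℝ) : ℝ :=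
  deriv (fun s => ρ s x) t + deriv (fun y => ρ t y * u t y) x

/-- The left-hand side of `∂ₜ(ρ v) + ∂ₓ(ρ u v) = 0`, the transport of a quantity `v` along the
flow `u` in conservative form. It is the Aw–Rascle momentum equation when `v` is the desired
velocity. -/
noncomputable def transportResidual (ρ u v : ℝ → ℝ → ℝ) (t x : ℝ) : ℝ :=
  deriv (fun s => ρ s x * v s x) t + deriv (fun y => ρ t y * u t y * v t y) x

/-- The left-hand side of the pressureless Navier–Stokes momentum equation
`∂ₜ(ρ u) + ∂ₓ(ρ u²) - ∂ₓ(λ(ρ) ∂ₓu) = 0` with viscosity `λ(ρ) = ρ² p'(ρ)`. -/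
noncomputable def navierStokesResidual (p : ℝ → ℝ) (ρ u : ℝ → ℝ → ℝ) (t x : ℝ) : ℝ :=
  deriv (fun s => ρ s x * u s x) t + deriv (fun y => ρ t y * (u t y) ^ 2) x
    - deriv (fun y => (ρ t y) ^ 2 * deriv p (ρ t y) * deriv (u t) y) x

lemma deriv_mul_continuityResidual (hp : DifferentiableAt ℝ p (ρ t x))
    (hρ : DifferentiableAt ℝ (uncurry ρ) (t, x)) (hu : DifferentiableAt ℝ (u t) x) :
    deriv p (ρ t x) * continuityResidual ρ u t x
      = deriv (fun s => p (ρ s x)) t + u t x * deriv (fun y => p (ρ t y)) x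
        + ρ t x * deriv p (ρ t x) * deriv (u t) x := by
  have hρt := differentiableAt_uncurry_left hρ
  have hρx := differentiableAt_uncurry_right hρ
  have ht : deriv (fun s => p (ρ s x)) t = deriv p (ρ t x) * deriv (fun s => ρ s x) t :=
    deriv_comp (h := fun s => ρ s x) t hp hρt
  have hx : deriv (fun y => p (ρ t y)) x = deriv p (ρ t x) * deriv (ρ t) x := deriv_comp x hp hρx
  rw [continuityResidual, deriv_fun_mul hρx hu, ht, hx]
  ring

lemma transportResidual_add {v z : ℝ → ℝ → ℝ} (hρ : DifferentiableAt ℝ (uncurry ρ) (t, x))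
    (hu : DifferentiableAt ℝ (u t) x) (hv : DifferentiableAt ℝ (uncurry v) (t, x))
    (hz : DifferentiableAt ℝ (uncurry z) (t, x)) :
    transportResidual ρ u (fun s y => v s y + z s y) t x
      = transportResidual ρ u v t x + transportResidual ρ u z t x := by
  have hρt := differentiableAt_uncurry_left hρ
  have hρu := (differentiableAt_uncurry_right hρ).fun_mul hu
  simp only [transportResidual, mul_add]
  rw [deriv_fun_add (hρt.fun_mul (differentiableAt_uncurry_left hv))
      (hρt.fun_mul (differentiableAt_uncurry_left hz)),
    deriv_fun_add (hρu.fun_mul (differentiableAt_uncurry_right hv))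
      (hρu.fun_mul (differentiableAt_uncurry_right hz))]
  ring

lemma navierStokesResidual_eq_transportResidual_sub :
    navierStokesResidual p ρ u t x
      = transportResidual ρ u u t x
        - deriv (fun y => (ρ t y) ^ 2 * deriv p (ρ t y) * deriv (u t) y) x := by
  simp only [transportResidual, navierStokesResidual, pow_two, mul_assoc]

lemma transportResidual_deriv_comp (hp : ContDiffAt ℝ 2 p (ρ t x))
    (hρ : ContDiffAt ℝ 2 (uncurry ρ) (t, x)) (hu : ContDiffAt ℝ 2 (u t) x) :
    transportResidual ρ u (fun s y => deriv (fun r => p (ρ s r)) y) t x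
      = deriv (fun y => ρ t y * (deriv p (ρ t y) * continuityResidual ρ u t y)) x
        - deriv (fun y => (ρ t y) ^ 2 * deriv p (ρ t y) * deriv (u t) y) x := by
  have hpρ : ContDiffAt ℝ 2 (uncurry fun s y => p (ρ s y)) (t, x) := hp.comp (t, x) hρ
  have hρx := differentiableAt_uncurry_right (hρ.differentiableAt two_ne_zero)
  have hpρt := differentiableAt_uncurry_right
    ((contDiffAt_uncurry_deriv_left hpρ one_add_one_eq_two.le).differentiableAt one_ne_zero)
  have hpρx := differentiableAt_uncurry_right
    ((contDiffAt_uncurry_deriv_right hpρ one_add_one_eq_two.le).differentiableAt one_ne_zero)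
  have hp' : DifferentiableAt ℝ (fun y => deriv p (ρ t y)) x :=
    ((hp.derivWithin one_add_one_eq_two.le).differentiableAt one_ne_zero).comp x hρx
  have hu' : DifferentiableAt ℝ (deriv (u t)) x :=
    (hu.derivWithin one_add_one_eq_two.le).differentiableAt one_ne_zero
  have hflux : DifferentiableAt ℝ (fun y => ρ t y * u t y * deriv (fun r => p (ρ t r)) y) x :=
    (hρx.fun_mul (hu.differentiableAt two_ne_zero)).fun_mul hpρx
  have hrenormalized : (fun y => ρ t y * (deriv p (ρ t y) * continuityResidual ρ u t y)) =ᶠ[𝓝 x]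
      fun y => ρ t y * deriv (fun s => p (ρ s y)) t
        + ρ t y * u t y * deriv (fun r => p (ρ t r)) y
        + (ρ t y) ^ 2 * deriv p (ρ t y) * deriv (u t) y := by
    filter_upwards [hρx.continuousAt.eventually (hp.eventually (by simp)),
      (Continuous.prodMk_right t).tendsto x |>.eventually (hρ.eventually (by simp)),
      hu.eventually (by simp)] with y hpy hρy huy
    rw [deriv_mul_continuityResidual (hpy.differentiableAt two_ne_zero)
      (hρy.differentiableAt two_ne_zero) (huy.differentiableAt two_ne_zero)]
    ring
  rw [transportResidual, deriv_mul_deriv_comp_comm hp hρ (by simp), hrenormalized.deriv_eq,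
    deriv_fun_add ((hρx.fun_mul hpρt).fun_add hflux) (((hρx.fun_pow 2).fun_mul hp').fun_mul hu'),
    deriv_fun_add (hρx.fun_mul hpρt) hflux, add_sub_cancel_right]

lemma transportResidual_desiredVelocity (hp : ContDiffAt ℝ 2 p (ρ t x))
    (hρ : ContDiffAt ℝ 2 (uncurry ρ) (t, x)) (hu : ContDiffAt ℝ 2 (uncurry u) (t, x)) :
    transportResidual ρ u (desiredVelocity p ρ u) t x
      = navierStokesResidual p ρ u t x
        + deriv (fun y => ρ t y * (deriv p (ρ t y) * continuityResidual ρ u t y)) x := by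
  have hut : ContDiffAt ℝ 2 (u t) x := hu.comp x (contDiffAt_const.prodMk contDiffAt_id)
  have hpρ : ContDiffAt ℝ 2 (uncurry fun s y => p (ρ s y)) (t, x) := hp.comp (t, x) hρ
  have hpρx := contDiffAt_uncurry_deriv_right hpρ one_add_one_eq_two.le
  calc transportResidual ρ u (desiredVelocity p ρ u) t x
      = transportResidual ρ u u t x
        + transportResidual ρ u (fun s y => deriv (fun r => p (ρ s r)) y) t x :=
        transportResidual_add (hρ.differentiableAt two_ne_zero)
          (hut.differentiableAt two_ne_zero) (hu.differentiableAt two_ne_zero)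
          (hpρx.differentiableAt one_ne_zero)
    _ = _ := by
        rw [navierStokesResidual_eq_transportResidual_sub, transportResidual_deriv_comp hp hρ hut]
        ring

theorem stmt1_general (hp : ContDiffAt ℝ 2 p (ρ t x)) (hρ : ContDiffAt ℝ 2 (uncurry ρ) (t, x))
    (hu : ContDiffAt ℝ 2 (uncurry u) (t, x)) (hcont : ∀ᶠ y in 𝓝 x, continuityResidual ρ u t y = 0) :
    transportResidual ρ u (desiredVelocity p ρ u) t x = navierStokesResidual p ρ u t x := by
  have hvanish : (fun y => ρ t y * (deriv p (ρ t y) * continuityResidual ρ u t y)) =ᶠ[𝓝 x]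
      fun _ => 0 :=
    hcont.mono fun y hy => by simp only [hy, mul_zero]
  rw [transportResidual_desiredVelocity hp hρ hu, hvanish.deriv_eq, deriv_const, add_zero]

end AwRascle

/-- Equivalence, for smooth solutions of the continuity equation, between the Aw–Rascle
momentum equation (with gradient offset `w = u + ∂ₓ p(ρ)`) and the pressureless
compressible Navier–Stokes momentum equation with viscosity `λ(ρ) = ρ² p'(ρ)`. -/
theorem stmt1
    (p : ℝ → ℝ) (hp : ContDiffOn ℝ 2 p (Set.Ioo 0 1))
    (ρ u : ℝ → ℝ → ℝ)
    (hρ : ContDiff ℝ (⊤ : ℕ∞) (fun q : ℝ × ℝ => ρ q.1 q.2))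
    (hu : ContDiff ℝ (⊤ : ℕ∞) (fun q : ℝ × ℝ => u q.1 q.2))
    (hρrange : ∀ t x, ρ t x ∈ Set.Ioo (0 : ℝ) 1)
    (hcont : ∀ t x,
      deriv (fun s => ρ s x) t + deriv (fun y => ρ t y * u t y) x = 0)
    (w : ℝ → ℝ → ℝ)
    (hw : ∀ t x, w t x = u t x + deriv (fun y => p (ρ t y)) x) :
    (∀ t x,
      deriv (fun s => ρ s x * w s x) t
        + deriv (fun y => ρ t y * u t y * w t y) x = 0)
    ↔ (∀ t x,
      deriv (fun s => ρ s x * u s x) t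
        + deriv (fun y => ρ t y * (u t y) ^ 2) x
        - deriv (fun y => (ρ t y) ^ 2 * deriv p (ρ t y) * deriv (u t) y) x = 0) := by
  obtain rfl : w = desiredVelocity p ρ u := funext₂ hw
  exact forall₂_congr fun t x => Eq.congr_left <|
    stmt1_general (hp.contDiffAt (isOpen_Ioo.mem_nhds (hρrange t x)))
      (hρ.of_le (WithTop.coe_le_coe.2 le_top)).contDiffAt
      (hu.of_le (WithTop.coe_le_coe.2 le_top)).contDiffAt (.of_forall (hcont t))
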